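/- Let −1 < β < 0 and ν ≥ 1/2. Then for all x > 0, ( e^{−βx} K_{ν+2}(x) / x^{ν−1} ) · ∫_0^x e^{βt} t^ν I_ν(t) dt < 2(ν+1) / ((2ν+1)(1+β)). -/

import Mathlib

open Real MeasureTheory

/-- Modified Bessel function of the first kind, `I_ν(x) = ∑_{k} (x/2)^{ν+2k} / (Γ(ν+k+1) k!)`. -/
noncomputable def besselI (ν x : ℝ) : ℝ :=
  ∑' k : ℕ, (x / 2) ^ (ν + 2 * (k : ℝ)) / (Real.Gamma (ν + (k : ℝ) + 1) * (Nat.factorial k : ℝ))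

/-- Modified Bessel function of the second kind, `K_ν(x) = ∫_0^∞ e^{-x cosh t} cosh(ν t) dt`. -/
noncomputable def besselK (ν x : ℝ) : ℝ :=
  ∫ t in Set.Ioi (0 : ℝ), Real.exp (-x * Real.cosh t) * Real.cosh (ν * t)

/-- Lower incomplete gamma function `γ(a, x) = ∫_0^x t^{a-1} e^{-t} dt`. -/
noncomputable def lowerIncGamma (a x : ℝ) : ℝ :=
  ∫ t in (0 : ℝ)..x, t ^ (a - 1) * Real.exp (-t)

/-!
For `ν ≥ 1 / 2` the function `f t = t ^ ν I_ν(t)` satisfies `f ≤ f'`, hence `∫ f ≤ f`, and an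
integration by parts then bounds `(1 + β) ∫ exp (β t) f t` over `[0, x]` by `exp (β x) ∫ f`.
Differentiating `x ^ ν I_{ν+1}(x)` shows that `∫ f` is at most `2 (ν + 1) / (2 ν + 1)` times it, and
what is left is `x I_{ν+1}(x) K_{ν+2}(x) < 1`. This follows from the Wronskian identity
`I_ν K_{ν+1} + I_{ν+1} K_ν = 1 / x` with `ν + 1` in place of `ν`: `x` times its left side has zero
derivative, and its limit `1` at `0` comes from `x ^ ν K_ν(x) → 2 ^ (ν - 1) Γ(ν)`.
-/

open Filter Set Topology

section BesselClifford

variable {ν x : ℝ}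

/-- The `k`-th Taylor coefficient `1 / (Γ(ν + k + 1) k!)` of the Bessel–Clifford function. For `ν` a
negative integer the convention `Γ(-n) = 0` in `Real.Gamma` gives `1 / Γ(-n) = 0`, the value of the
entire function `1 / Γ`, so the recurrences below hold for every real `ν`. -/
noncomputable def besselCliffordCoeff (ν : ℝ) (k : ℕ) : ℝ :=
  (Gamma (ν + k + 1) * k.factorial)⁻¹

/-- The Bessel–Clifford function `∑ z ^ k / (Γ(ν + k + 1) k!)`, an entire function of `z` through
which `I_ν(x) = (x / 2) ^ ν * besselClifford ν (x² / 4)`. -/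
noncomputable def besselClifford (ν z : ℝ) : ℝ := ∑' k, besselCliffordCoeff ν k * z ^ k

lemma besselCliffordCoeff_pos (hν : -1 < ν) (k : ℕ) : 0 < besselCliffordCoeff ν k := by
  have : 0 < Gamma (ν + k + 1) := Gamma_pos_of_pos (by linarith [k.cast_nonneg (α := ℝ)])
  unfold besselCliffordCoeff
  positivity

lemma inv_Gamma_eq_mul_inv_Gamma_add_one (s : ℝ) : (Gamma s)⁻¹ = s * (Gamma (s + 1))⁻¹ := by
  rcases eq_or_ne s 0 with rfl | hs
  · simp [Gamma_zero]
  · rw [Gamma_add_one hs, mul_inv, mul_inv_cancel_left₀ hs]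

lemma besselCliffordCoeff_eq_mul_add_one (ν : ℝ) (k : ℕ) :
    besselCliffordCoeff ν k = (ν + k + 1) * besselCliffordCoeff (ν + 1) k := by
  simp only [besselCliffordCoeff, mul_inv]
  rw [inv_Gamma_eq_mul_inv_Gamma_add_one, add_right_comm ν 1 (k : ℝ), mul_assoc]

lemma succ_mul_besselCliffordCoeff_succ (ν : ℝ) (k : ℕ) :
    (k + 1) * besselCliffordCoeff ν (k + 1) = besselCliffordCoeff (ν + 1) k := by
  simp only [besselCliffordCoeff, Nat.factorial_succ]
  push_cast
  rw [show ν + (k + 1) + 1 = ν + 1 + k + 1 by ring]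
  field_simp

lemma summable_besselCliffordCoeff_mul_pow (ν z : ℝ) :
    Summable fun k ↦ besselCliffordCoeff ν k * z ^ k := by
  refine summable_of_ratio_norm_eventually_le (r := 1 / 2) (by norm_num) ?_
  filter_upwards [tendsto_natCast_atTop_atTop.eventually_ge_atTop (2 * |z| + |ν|)] with k hk
  have hratio : 2 * |z| ≤ ‖(ν + k + 1) * (k + 1)‖ := by
    refine le_trans ?_ (le_norm_self _)
    nlinarith [neg_abs_le ν, abs_nonneg z, abs_nonneg ν]
  have hcoeff : besselCliffordCoeff ν k =
      (ν + k + 1) * (k + 1) * besselCliffordCoeff ν (k + 1) := by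
    rw [besselCliffordCoeff_eq_mul_add_one, ← succ_mul_besselCliffordCoeff_succ, mul_assoc]
  calc ‖besselCliffordCoeff ν (k + 1) * z ^ (k + 1)‖
      = 1 / 2 * (2 * |z| * ‖besselCliffordCoeff ν (k + 1) * z ^ k‖) := by
        simp only [norm_mul, norm_pow, norm_eq_abs]
        ring
    _ ≤ 1 / 2 * (‖(ν + k + 1) * (k + 1)‖ * ‖besselCliffordCoeff ν (k + 1) * z ^ k‖) := by
        gcongr
    _ = 1 / 2 * ‖besselCliffordCoeff ν k * z ^ k‖ := by
        rw [hcoeff, mul_assoc _ (besselCliffordCoeff ν (k + 1)), norm_mul (_ * _)]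

lemma besselClifford_zero (ν : ℝ) : besselClifford ν 0 = (Gamma (ν + 1))⁻¹ := by
  rw [besselClifford, tsum_eq_single 0 fun k hk ↦ by simp [hk]]
  simp [besselCliffordCoeff]

lemma besselClifford_pos (hν : -1 < ν) {z : ℝ} (hz : 0 ≤ z) : 0 < besselClifford ν z :=
  (summable_besselCliffordCoeff_mul_pow ν z).tsum_pos
    (fun k ↦ mul_nonneg (besselCliffordCoeff_pos hν k).le (pow_nonneg hz k)) 0
    (by simpa using besselCliffordCoeff_pos hν 0)

lemma besselClifford_eq_add (ν z : ℝ) :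
    besselClifford ν z = (ν + 1) * besselClifford (ν + 1) z + z * besselClifford (ν + 2) z := by
  have hsum₀ := summable_besselCliffordCoeff_mul_pow ν z
  have hsum₁ := summable_besselCliffordCoeff_mul_pow (ν + 1) z
  have hsum₂ := summable_besselCliffordCoeff_mul_pow (ν + 2) z
  unfold besselClifford
  rw [hsum₀.tsum_eq_zero_add, hsum₁.tsum_eq_zero_add, mul_add, add_assoc, ← tsum_mul_left,
    ← tsum_mul_left,
    ← Summable.tsum_add (((summable_nat_add_iff 1).2 hsum₁).mul_left _) (hsum₂.mul_left _)]
  congr 1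
  · simp [besselCliffordCoeff_eq_mul_add_one ν 0]
  · refine tsum_congr fun k ↦ ?_
    rw [besselCliffordCoeff_eq_mul_add_one ν (k + 1), show ν + 2 = ν + 1 + 1 by ring,
      ← succ_mul_besselCliffordCoeff_succ (ν + 1) k]
    push_cast
    ring

lemma hasSum_besselCliffordCoeff_mul_deriv_pow (ν z : ℝ) :
    HasSum (fun k : ℕ ↦ besselCliffordCoeff ν k * (k * z ^ (k - 1)))
      (besselClifford (ν + 1) z) := by
  rw [← hasSum_nat_add_iff' 1]
  simp only [Finset.sum_range_one, Nat.cast_zero, zero_mul, mul_zero, sub_zero,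
    Nat.add_sub_cancel]
  refine (summable_besselCliffordCoeff_mul_pow (ν + 1) z).hasSum.congr_fun fun k ↦ ?_
  rw [← succ_mul_besselCliffordCoeff_succ]
  push_cast
  ring

lemma hasDerivAt_besselClifford (ν z : ℝ) :
    HasDerivAt (besselClifford ν) (besselClifford (ν + 1) z) z := by
  rw [← (hasSum_besselCliffordCoeff_mul_deriv_pow ν z).tsum_eq]
  have hz : z ∈ Metric.ball (0 : ℝ) (|z| + 1) := by simp
  refine hasDerivAt_tsum_of_isPreconnected
    (hasSum_besselCliffordCoeff_mul_deriv_pow ν (|z| + 1)).summable.norm Metric.isOpen_ball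
    (convex_ball _ _).isPreconnected (fun k y _ ↦ (hasDerivAt_pow k y).const_mul _)
    (fun k y hy ↦ ?_) hz (summable_besselCliffordCoeff_mul_pow ν z) hz
  have hy' : |y| ≤ |(|z| + 1)| := (mem_ball_zero_iff.1 hy).le.trans (le_abs_self _)
  simp only [norm_mul, norm_pow, norm_eq_abs]
  gcongr

lemma continuous_besselClifford (ν : ℝ) : Continuous (besselClifford ν) :=
  continuous_iff_continuousAt.2 fun z ↦ (hasDerivAt_besselClifford ν z).continuousAt

lemma hasDerivAt_besselClifford_sq_div_four (ν x : ℝ) :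
    HasDerivAt (fun y ↦ besselClifford ν (y ^ 2 / 4))
      (x / 2 * besselClifford (ν + 1) (x ^ 2 / 4)) x := by
  have hsq : HasDerivAt (fun y : ℝ ↦ y ^ 2 / 4) (x / 2) x :=
    ((hasDerivAt_pow 2 x).div_const 4).congr_deriv (by norm_num; ring)
  exact ((hasDerivAt_besselClifford ν (x ^ 2 / 4)).comp x hsq).congr_deriv (mul_comm _ _)

end BesselClifford

section BesselI

variable {a ν x : ℝ}

lemma besselI_eq (ν : ℝ) (hx : 0 < x) :
    besselI ν x = (x / 2) ^ ν * besselClifford ν (x ^ 2 / 4) := by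
  rw [besselI, besselClifford, ← tsum_mul_left]
  refine tsum_congr fun k ↦ ?_
  rw [rpow_add (by positivity), rpow_mul (by positivity), rpow_natCast, rpow_two, div_pow,
    besselCliffordCoeff, show (2 : ℝ) ^ 2 = 4 by norm_num]
  ring

lemma besselI_pos (hν : -1 < ν) (hx : 0 < x) : 0 < besselI ν x := by
  rw [besselI_eq ν hx]
  exact mul_pos (by positivity) (besselClifford_pos hν (by positivity))

lemma besselI_zero_right (hν : 0 < ν) : besselI ν 0 = 0 := by
  have hterm (k : ℕ) : (0 : ℝ) ^ (ν + 2 * k) = 0 := zero_rpow (by positivity)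
  simp only [besselI, zero_div, hterm, tsum_zero]

lemma besselI_eq_add (ν : ℝ) (hx : 0 < x) :
    besselI ν x = 2 * (ν + 1) / x * besselI (ν + 1) x + besselI (ν + 2) x := by
  rw [besselI_eq _ hx, besselI_eq _ hx, besselI_eq _ hx, besselClifford_eq_add,
    rpow_add (by positivity) ν 1, rpow_add (by positivity) ν 2, rpow_one, rpow_two]
  field_simp
  ring

lemma hasDerivAt_besselI (ν : ℝ) (hx : 0 < x) :
    HasDerivAt (besselI ν) (besselI (ν + 1) x + ν / x * besselI ν x) x := by
  have hpow : HasDerivAt (fun y : ℝ ↦ (y / 2) ^ ν) (1 / 2 * ν * (x / 2) ^ (ν - 1)) x :=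
    ((hasDerivAt_id x).div_const 2).rpow_const (Or.inl (by simpa using hx.ne'))
  have hprod := hpow.mul (hasDerivAt_besselClifford_sq_div_four ν x)
  refine (hprod.congr_of_eventuallyEq ?_).congr_deriv ?_
  · filter_upwards [lt_mem_nhds hx] with y hy using besselI_eq ν hy
  · rw [besselI_eq _ hx, besselI_eq _ hx, rpow_sub_one (by positivity),
      rpow_add_one (by positivity)]
    field_simp
    ring

lemma hasDerivAt_besselI_add_one (ν : ℝ) (hx : 0 < x) :
    HasDerivAt (besselI (ν + 1)) (besselI ν x - (ν + 1) / x * besselI (ν + 1) x) x := by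
  refine (hasDerivAt_besselI (ν + 1) hx).congr_deriv ?_
  rw [besselI_eq_add ν hx, add_assoc ν 1 1, one_add_one_eq_two]
  ring

lemma hasDerivAt_rpow_mul_besselI (a ν : ℝ) (hx : 0 < x) :
    HasDerivAt (fun y ↦ y ^ a * besselI ν y)
      (x ^ a * ((a + ν) / x * besselI ν x + besselI (ν + 1) x)) x := by
  refine ((hasDerivAt_rpow_const (Or.inl hx.ne')).mul (hasDerivAt_besselI ν hx)).congr_deriv ?_
  rw [rpow_sub_one hx.ne']
  ring

lemma rpow_mul_besselI_zero_right (h : 0 < a + ν) : (0 : ℝ) ^ a * besselI ν 0 = 0 := by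
  rcases eq_or_ne a 0 with rfl | ha
  · rw [besselI_zero_right (by simpa using h), mul_zero]
  · rw [zero_rpow ha, zero_mul]

lemma continuousOn_rpow_mul_besselI (h : 0 < a + ν) :
    ContinuousOn (fun x ↦ x ^ a * besselI ν x) (Ici 0) := by
  have hcont : Continuous fun x : ℝ ↦ (2 ^ ν)⁻¹ * x ^ (a + ν) * besselClifford ν (x ^ 2 / 4) :=
    (continuous_const.mul (continuous_id.rpow_const fun _ ↦ Or.inr h.le)).mul
      ((continuous_besselClifford ν).comp (by fun_prop))
  refine hcont.continuousOn.congr fun x hx ↦ ?_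
  rcases (mem_Ici.1 hx).eq_or_lt with rfl | hx
  · simp only [rpow_mul_besselI_zero_right h, zero_rpow h.ne', mul_zero, zero_mul]
  · simp only [besselI_eq ν hx, div_rpow hx.le zero_le_two, rpow_add hx]
    ring

-- `e^t` times the difference of the two sides has derivative `(2ν - 1) e^t C_ν(t²/4) ≥ 0`.
lemma mul_besselClifford_le (hν : 1 / 2 ≤ ν) (hx : 0 ≤ x) :
    x * besselClifford ν (x ^ 2 / 4) ≤
      2 * ν * besselClifford ν (x ^ 2 / 4) + x ^ 2 / 2 * besselClifford (ν + 1) (x ^ 2 / 4) := by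
  set g : ℝ → ℝ := fun t ↦ exp t * (2 * ν * besselClifford ν (t ^ 2 / 4) +
    t ^ 2 / 2 * besselClifford (ν + 1) (t ^ 2 / 4) - t * besselClifford ν (t ^ 2 / 4)) with hg
  have hderiv (t : ℝ) : HasDerivAt g (exp t * ((2 * ν - 1) * besselClifford ν (t ^ 2 / 4))) t := by
    have hC₀ := hasDerivAt_besselClifford_sq_div_four ν t
    have hC₁ := hasDerivAt_besselClifford_sq_div_four (ν + 1) t
    have hsq : HasDerivAt (fun y : ℝ ↦ y ^ 2 / 2) t t :=
      ((hasDerivAt_pow 2 t).div_const 2).congr_deriv (by norm_num)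
    refine ((hasDerivAt_exp t).mul
      (((hC₀.const_mul (2 * ν)).add (hsq.mul hC₁)).sub ((hasDerivAt_id t).mul hC₀))).congr_deriv ?_
    simp only [id, Pi.add_apply, Pi.mul_apply, Pi.sub_apply]
    rw [besselClifford_eq_add ν, add_assoc ν 1 1, one_add_one_eq_two]
    ring
  have hC (t : ℝ) : 0 < besselClifford ν (t ^ 2 / 4) :=
    besselClifford_pos (by linarith) (by positivity)
  have hmono : Monotone g := monotone_of_hasDerivAt_nonneg hderiv fun t ↦
    mul_nonneg (exp_pos t).le (mul_nonneg (by linarith) (hC t).le)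
  have hg_nonneg : 0 ≤ g x := by
    refine le_trans ?_ (hmono hx)
    have := hC 0
    simp only [hg, exp_zero]
    nlinarith
  linarith [nonneg_of_mul_nonneg_right hg_nonneg (exp_pos x)]

lemma mul_besselI_le (hν : 1 / 2 ≤ ν) (hx : 0 < x) :
    x * besselI ν x ≤ 2 * ν * besselI ν x + x * besselI (ν + 1) x := by
  rw [besselI_eq _ hx, besselI_eq _ hx, rpow_add_one (by positivity)]
  have := mul_le_mul_of_nonneg_left (mul_besselClifford_le hν hx.le)
    (rpow_nonneg (show 0 ≤ x / 2 by positivity) ν)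
  linarith

end BesselI

section BesselK

variable {ν x : ℝ}

/-- The integrand `exp (ν t - x cosh t)` of the whole-line representation
`K_ν(x) = (1 / 2) ∫ exp (ν t - x cosh t) dt`. -/
noncomputable def besselKKernel (ν x t : ℝ) : ℝ := exp (ν * t - x * cosh t)

lemma besselKKernel_pos (ν x t : ℝ) : 0 < besselKKernel ν x t := exp_pos _

lemma continuous_besselKKernel (ν x : ℝ) : Continuous (besselKKernel ν x) := by
  unfold besselKKernel
  fun_prop

lemma cosh_mul_besselKKernel (ν x t : ℝ) :
    cosh t * besselKKernel ν x t =
      (besselKKernel (ν + 1) x t + besselKKernel (ν - 1) x t) / 2 := by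
  simp only [besselKKernel, cosh_eq, sub_mul, add_mul, one_mul, exp_add, exp_sub, exp_neg]
  field_simp

lemma sinh_mul_besselKKernel (ν x t : ℝ) :
    sinh t * besselKKernel ν x t =
      (besselKKernel (ν + 1) x t - besselKKernel (ν - 1) x t) / 2 := by
  simp only [besselKKernel, sinh_eq, sub_mul, add_mul, one_mul, exp_add, exp_sub, exp_neg]
  field_simp

lemma antitone_besselKKernel (ν t : ℝ) : Antitone fun x ↦ besselKKernel ν x t := by
  intro x y hxy
  have := cosh_pos t
  simp only [besselKKernel]
  gcongr

lemma sq_div_four_le_cosh (t : ℝ) : t ^ 2 / 4 ≤ cosh t := by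
  rw [← cosh_abs, ← sq_abs, cosh_eq]
  linarith [quadratic_le_exp_of_nonneg (abs_nonneg t), abs_nonneg t, exp_pos (-|t|)]

lemma integrable_besselKKernel (ν : ℝ) (hx : 0 < x) : Integrable (besselKKernel ν x) := by
  refine ((integrable_exp_neg_mul_sq (b := x / 8) (by positivity)).const_mul
    (exp (2 * ν ^ 2 / x))).mono' (continuous_besselKKernel ν x).aestronglyMeasurable
    (.of_forall fun t ↦ ?_)
  rw [norm_of_nonneg (besselKKernel_pos ν x t).le, besselKKernel, ← exp_add]
  have hcosh : x * (t ^ 2 / 4) ≤ x * cosh t := by gcongr; exact sq_div_four_le_cosh t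
  have hsquare : 2 * ν ^ 2 / x + x / 8 * t ^ 2 - ν * t = (4 * ν - x * t) ^ 2 / (8 * x) := by
    field_simp
    ring
  have : 0 ≤ (4 * ν - x * t) ^ 2 / (8 * x) := by positivity
  gcongr
  linarith

lemma besselK_eq_integral_besselKKernel (ν : ℝ) (hx : 0 < x) :
    besselK ν x = (∫ t, besselKKernel ν x t) / 2 := by
  have hint := integrable_besselKKernel ν hx
  calc besselK ν x
      = ∫ t in Ioi (0 : ℝ), (besselKKernel ν x t + besselKKernel ν x (-t)) / 2 := by
        refine integral_congr_ae (.of_forall fun t ↦ ?_)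
        simp only [besselKKernel, cosh_neg, cosh_eq (ν * t), exp_sub, neg_mul, mul_neg, exp_neg]
        ring
    _ = ((∫ t in Ioi (0 : ℝ), besselKKernel ν x t) +
          ∫ t in Iic (0 : ℝ), besselKKernel ν x t) / 2 := by
        rw [integral_div, integral_add hint.integrableOn hint.comp_neg.integrableOn,
          integral_comp_neg_Ioi, neg_zero]
    _ = (∫ t, besselKKernel ν x t) / 2 := by
        rw [add_comm, intervalIntegral.integral_Iic_add_Ioi hint.integrableOn hint.integrableOn]

lemma besselK_pos (ν : ℝ) (hx : 0 < x) : 0 < besselK ν x := by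
  rw [besselK_eq_integral_besselKKernel ν hx]
  exact half_pos (integral_exp_pos (integrable_besselKKernel ν hx))

lemma hasDerivAt_besselKKernel (ν x t : ℝ) :
    HasDerivAt (fun y ↦ besselKKernel ν y t)
      (-((besselKKernel (ν + 1) x t + besselKKernel (ν - 1) x t) / 2)) x := by
  rw [← cosh_mul_besselKKernel]
  exact (((hasDerivAt_id x).mul_const (cosh t)).const_sub (ν * t)).exp.congr_deriv
    (by simp only [besselKKernel, id]; ring)

lemma hasDerivAt_besselK_neg_average (ν : ℝ) (hx : 0 < x) :
    HasDerivAt (besselK ν) (-((besselK (ν + 1) x + besselK (ν - 1) x) / 2)) x := by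
  have hint (a : ℝ) {y : ℝ} (hy : 0 < y) := integrable_besselKKernel a hy
  have hderiv := (hasDerivAt_integral_of_dominated_loc_of_deriv_le (μ := volume)
    (F := fun y t ↦ besselKKernel ν y t)
    (bound := fun t ↦ (besselKKernel (ν + 1) (x / 2) t + besselKKernel (ν - 1) (x / 2) t) / 2)
    (Ioi_mem_nhds (half_lt_self hx))
    (.of_forall fun y ↦ (continuous_besselKKernel ν y).aestronglyMeasurable) (hint ν hx)
    (((hint _ hx).add (hint _ hx)).div_const 2).neg.aestronglyMeasurable
    (.of_forall fun t y hy ↦ ?_)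
    (((hint _ (half_pos hx)).add (hint _ (half_pos hx))).div_const 2)
    (.of_forall fun t y _ ↦ hasDerivAt_besselKKernel ν y t)).2
  · refine ((hderiv.div_const 2).congr_of_eventuallyEq ?_).congr_deriv ?_
    · filter_upwards [lt_mem_nhds hx] with y hy using besselK_eq_integral_besselKKernel ν hy
    · rw [integral_neg, integral_div, integral_add (hint _ hx) (hint _ hx),
        besselK_eq_integral_besselKKernel _ hx, besselK_eq_integral_besselKKernel _ hx]
      ring
  · have hle (a : ℝ) := antitone_besselKKernel a t (mem_Ioi.1 hy).le
    rw [norm_neg, norm_of_nonneg]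
    · linarith [hle (ν + 1), hle (ν - 1)]
    · linarith [besselKKernel_pos (ν + 1) y t, besselKKernel_pos (ν - 1) y t]

-- The derivative of `exp (ν t - x cosh t)` in `t` has integral zero over the line.
lemma besselK_add_one_sub_besselK_sub_one (ν : ℝ) (hx : 0 < x) :
    besselK (ν + 1) x - besselK (ν - 1) x = 2 * ν / x * besselK ν x := by
  have hint (a : ℝ) := integrable_besselKKernel a hx
  have hderiv (t : ℝ) : HasDerivAt (besselKKernel ν x) (ν * besselKKernel ν x t -
      x / 2 * (besselKKernel (ν + 1) x t - besselKKernel (ν - 1) x t)) t := by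
    refine (((hasDerivAt_id t).const_mul ν).sub
      ((hasDerivAt_cosh t).const_mul x)).exp.congr_deriv ?_
    simp only [id, Pi.sub_apply, mul_one]
    rw [← besselKKernel]
    linear_combination -x * sinh_mul_besselKKernel ν x t
  have hdiff : Integrable fun t ↦ besselKKernel (ν + 1) x t - besselKKernel (ν - 1) x t :=
    (hint _).sub (hint _)
  have hzero := integral_eq_zero_of_hasDerivAt_of_integrable hderiv
    (((hint ν).const_mul ν).sub (hdiff.const_mul (x / 2))) (hint ν)
  rw [integral_sub ((hint ν).const_mul ν) (hdiff.const_mul _), integral_const_mul,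
    integral_const_mul, integral_sub (hint _) (hint _)] at hzero
  simp only [besselK_eq_integral_besselKKernel _ hx]
  field_simp
  linarith

lemma hasDerivAt_besselK (ν : ℝ) (hx : 0 < x) :
    HasDerivAt (besselK ν) (ν / x * besselK ν x - besselK (ν + 1) x) x :=
  (hasDerivAt_besselK_neg_average ν hx).congr_deriv
    (by linear_combination besselK_add_one_sub_besselK_sub_one ν hx / 2)

lemma hasDerivAt_besselK_add_one (ν : ℝ) (hx : 0 < x) :
    HasDerivAt (besselK (ν + 1)) (-besselK ν x - (ν + 1) / x * besselK (ν + 1) x) x := by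
  have hrec := besselK_add_one_sub_besselK_sub_one (ν + 1) hx
  have hderiv := hasDerivAt_besselK_neg_average (ν + 1) hx
  rw [add_sub_cancel_right] at hrec hderiv
  exact hderiv.congr_deriv (by linear_combination -hrec / 2)

lemma rpow_mul_besselK_eq_integral (ν : ℝ) (hx : 0 < x) :
    x ^ ν * besselK ν x =
      2 ^ (ν - 1) * ∫ s in Ioi (0 : ℝ), exp (-s) * s ^ (ν - 1) * exp (-(x ^ 2 / (4 * s))) := by
  have hφ (t : ℝ) : HasDerivAt (fun t ↦ x / 2 * exp t) (x / 2 * exp t) t :=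
    (hasDerivAt_exp t).const_mul _
  have himage : (fun t ↦ x / 2 * exp t) '' univ = Ioi 0 := by
    rw [image_univ]
    ext s
    refine ⟨fun ⟨t, ht⟩ ↦ ht ▸ mem_Ioi.2 (by positivity), fun hs ↦ ⟨log (2 / x * s), ?_⟩⟩
    have hs : 0 < s := hs
    simp only [exp_log (show 0 < 2 / x * s by positivity)]
    field_simp
  have hinj : InjOn (fun t ↦ x / 2 * exp t) univ := fun s _ t _ hst ↦
    exp_injective (mul_left_cancel₀ (by positivity) hst)
  rw [← himage, integral_image_eq_integral_abs_deriv_smul MeasurableSet.univ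
    (fun t _ ↦ (hφ t).hasDerivWithinAt) hinj, besselK_eq_integral_besselKKernel ν hx,
    setIntegral_univ, ← integral_div, ← integral_const_mul, ← integral_const_mul]
  refine integral_congr_ae (.of_forall fun t ↦ ?_)
  have hexponent : -(x / 2 * exp t) + -(x ^ 2 / (4 * (x / 2 * exp t))) = -(x * cosh t) := by
    rw [cosh_eq, exp_neg]
    field_simp
    ring
  have hrpow : x / 2 * exp t * (x / 2 * exp t) ^ (ν - 1) = (x / 2) ^ ν * exp (ν * t) := by
    rw [rpow_sub_one (by positivity), mul_div_cancel₀ _ (by positivity),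
      mul_rpow (by positivity) (exp_pos t).le, ← exp_mul, mul_comm t]
  calc x ^ ν * (besselKKernel ν x t / 2)
      = 2 ^ (ν - 1) * ((x / 2) ^ ν * exp (ν * t) * exp (-(x * cosh t))) := by
        rw [besselKKernel, sub_eq_add_neg, exp_add, div_rpow hx.le zero_le_two,
          rpow_sub_one two_ne_zero]
        field_simp
    _ = 2 ^ (ν - 1) * (|x / 2 * exp t| • (exp (-(x / 2 * exp t)) * (x / 2 * exp t) ^ (ν - 1) *
          exp (-(x ^ 2 / (4 * (x / 2 * exp t)))))) := by
        rw [← hexponent, ← hrpow, exp_add, abs_of_pos (by positivity), smul_eq_mul]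
        ring

lemma tendsto_rpow_mul_besselK (hν : 0 < ν) :
    Tendsto (fun x ↦ x ^ ν * besselK ν x) (𝓝[>] 0) (𝓝 (2 ^ (ν - 1) * Gamma ν)) := by
  rw [Gamma_eq_integral hν]
  refine Tendsto.congr' (eventually_nhdsWithin_of_forall fun x hx ↦
    (rpow_mul_besselK_eq_integral ν hx).symm) (Tendsto.const_mul _ ?_)
  refine tendsto_integral_filter_of_dominated_convergence (fun s ↦ exp (-s) * s ^ (ν - 1))
    (.of_forall fun x ↦ ?_) (.of_forall fun x ↦ ?_) (GammaIntegral_convergent hν) ?_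
  · exact Measurable.aestronglyMeasurable (by fun_prop)
  · filter_upwards [ae_restrict_mem measurableSet_Ioi] with s hs
    have hs : 0 < s := hs
    rw [norm_of_nonneg (by positivity)]
    exact mul_le_of_le_one_right (by positivity) (exp_le_one_iff.2 (neg_nonpos.2 (by positivity)))
  · refine .of_forall fun s ↦ ?_
    have hcont : Continuous fun x : ℝ ↦ exp (-s) * s ^ (ν - 1) * exp (-(x ^ 2 / (4 * s))) := by
      fun_prop
    simpa using (hcont.tendsto 0).mono_left nhdsWithin_le_nhds

end BesselK

section Wronskian

variable {ν x : ℝ}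

lemma hasDerivAt_mul_besselI_mul_besselK_add (ν : ℝ) (hx : 0 < x) :
    HasDerivAt (fun y ↦ y * (besselI ν y * besselK (ν + 1) y + besselI (ν + 1) y * besselK ν y))
      0 x := by
  refine ((hasDerivAt_id x).mul
    (((hasDerivAt_besselI ν hx).mul (hasDerivAt_besselK_add_one ν hx)).add
      ((hasDerivAt_besselI_add_one ν hx).mul (hasDerivAt_besselK ν hx)))).congr_deriv ?_
  simp only [id, Pi.add_apply, Pi.mul_apply]
  field_simp
  ring

lemma tendsto_mul_besselI_mul_besselK_add (hν : 0 < ν) :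
    Tendsto (fun x ↦ x * (besselI ν x * besselK (ν + 1) x + besselI (ν + 1) x * besselK ν x))
      (𝓝[>] 0) (𝓝 1) := by
  have hC (a : ℝ) : Tendsto (fun x : ℝ ↦ besselClifford a (x ^ 2 / 4)) (𝓝[>] 0)
      (𝓝 (Gamma (a + 1))⁻¹) := by
    have hcont : Continuous fun x : ℝ ↦ besselClifford a (x ^ 2 / 4) :=
      (continuous_besselClifford a).comp (by fun_prop)
    simpa [besselClifford_zero] using (hcont.tendsto 0).mono_left nhdsWithin_le_nhds
  have hsq : Tendsto (fun x : ℝ ↦ (2 ^ (ν + 1))⁻¹ * x ^ 2) (𝓝[>] 0) (𝓝 0) := by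
    have hcont : Continuous fun x : ℝ ↦ ((2 : ℝ) ^ (ν + 1))⁻¹ * x ^ 2 := by fun_prop
    simpa using (hcont.tendsto 0).mono_left nhdsWithin_le_nhds
  have hlim := (((hC ν).const_mul ((2 : ℝ) ^ ν)⁻¹).mul
    (tendsto_rpow_mul_besselK (ν := ν + 1) (by linarith))).add
      ((hsq.mul (hC (ν + 1))).mul (tendsto_rpow_mul_besselK hν))
  have hGamma : Gamma (ν + 1) ≠ 0 := (Gamma_pos_of_pos (by linarith)).ne'
  have hvalue : ((2 : ℝ) ^ ν)⁻¹ * (Gamma (ν + 1))⁻¹ * (2 ^ (ν + 1 - 1) * Gamma (ν + 1)) +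
      0 * (Gamma (ν + 1 + 1))⁻¹ * (2 ^ (ν - 1) * Gamma ν) = 1 := by
    rw [add_sub_cancel_right]
    field_simp
    simp
  rw [hvalue] at hlim
  refine hlim.congr' (eventually_nhdsWithin_of_forall fun x hx ↦ ?_)
  have hx : 0 < x := hx
  simp only [besselI_eq _ hx, div_rpow hx.le zero_le_two, rpow_add_one hx.ne']
  field_simp

lemma besselI_mul_besselK_add (hν : 0 < ν) (hx : 0 < x) :
    besselI ν x * besselK (ν + 1) x + besselI (ν + 1) x * besselK ν x = 1 / x := by
  obtain ⟨c, hc⟩ := isOpen_Ioi.exists_is_const_of_deriv_eq_zero (convex_Ioi (0 : ℝ)).isPreconnected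
    (fun y hy ↦
      (hasDerivAt_mul_besselI_mul_besselK_add ν hy).differentiableAt.differentiableWithinAt)
    (fun y hy ↦ (hasDerivAt_mul_besselI_mul_besselK_add ν hy).deriv)
  have hc_one : c = 1 := tendsto_nhds_unique
    (tendsto_const_nhds.congr' (eventually_nhdsWithin_of_forall fun y hy ↦ (hc y hy).symm))
    (tendsto_mul_besselI_mul_besselK_add hν)
  rw [eq_div_iff hx.ne', mul_comm, hc x hx, hc_one]

lemma mul_besselI_mul_besselK_lt_one (hν : 0 < ν) (hx : 0 < x) :
    x * (besselI ν x * besselK (ν + 1) x) < 1 := by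
  have hpos : 0 < besselI (ν + 1) x * besselK ν x :=
    mul_pos (besselI_pos (by linarith) hx) (besselK_pos ν hx)
  rw [← lt_div_iff₀' hx, ← besselI_mul_besselK_add hν hx]
  exact lt_add_of_pos_right _ hpos

end Wronskian

section Integral

-- Where `∫ f ≤ f`, the derivative of `exp (β x) ∫ f` is at least `(1 + β) exp (β x) f x`.
lemma one_add_mul_integral_exp_mul_le {f : ℝ → ℝ} {a b β : ℝ} (hab : a ≤ b) (hβ : β ≤ 0)
    (hf : ContinuousOn f (Icc a b)) (hle : ∀ t ∈ Ioo a b, ∫ s in a..t, f s ≤ f t) :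
    (1 + β) * ∫ t in a..b, exp (β * t) * f t ≤ exp (β * b) * ∫ t in a..b, f t := by
  have hexp (t : ℝ) : HasDerivAt (fun t ↦ exp (β * t)) (exp (β * t) * β) t := by
    simpa using ((hasDerivAt_id t).const_mul β).exp
  have hprim (t : ℝ) (ht : t ∈ Ioo a b) : HasDerivAt (fun u ↦ ∫ s in a..u, f s) (f t) t :=
    intervalIntegral.integral_hasDerivAt_right
      (hf.mono (uIcc_of_le ht.1.le ▸ Icc_subset_Icc_right ht.2.le)).intervalIntegrable
      ((hf.mono Ioo_subset_Icc_self).stronglyMeasurableAtFilter isOpen_Ioo t ht)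
      (hf.continuousAt (Icc_mem_nhds ht.1 ht.2))
  have hcont : ContinuousOn (fun t ↦ exp (β * t) * ∫ s in a..t, f s) (Icc a b) := by
    refine ContinuousOn.mul (by fun_prop) ?_
    rw [← uIcc_of_le hab] at hf ⊢
    exact intervalIntegral.continuousOn_primitive_interval hf.integrableOn_uIcc
  have hint : IntegrableOn (fun t ↦ (1 + β) * (exp (β * t) * f t)) (Icc a b) :=
    (ContinuousOn.mul (by fun_prop) (ContinuousOn.mul (by fun_prop) hf)).integrableOn_Icc
  have hbound := intervalIntegral.integral_le_sub_of_hasDeriv_right_of_le hab hcont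
    (fun t ht ↦ ((hexp t).mul (hprim t ht)).hasDerivWithinAt) hint fun t ht ↦ by
      nlinarith [mul_nonneg (mul_nonneg (exp_pos (β * t)).le (neg_nonneg.2 hβ))
        (sub_nonneg.2 (hle t ht))]
  simpa [intervalIntegral.integral_const_mul] using hbound

variable {ν x : ℝ}

lemma integral_rpow_mul_besselI_le_rpow_mul_besselI (hν : 1 / 2 ≤ ν) (hx : 0 ≤ x) :
    ∫ t in 0..x, t ^ ν * besselI ν t ≤ x ^ ν * besselI ν x := by
  have hν₀ : 0 < ν + ν := by linarith
  have hcont : ContinuousOn (fun t ↦ t ^ ν * besselI ν t) (Icc 0 x) :=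
    (continuousOn_rpow_mul_besselI hν₀).mono Icc_subset_Ici_self
  have hbound := intervalIntegral.integral_le_sub_of_hasDeriv_right_of_le hx hcont
    (fun t ht ↦ (hasDerivAt_rpow_mul_besselI ν ν ht.1).hasDerivWithinAt) hcont.integrableOn_Icc
    fun t ht ↦ by
      have ht₀ : 0 < t := ht.1
      gcongr
      have := mul_besselI_le hν ht₀
      field_simp
      linarith
  rwa [rpow_mul_besselI_zero_right hν₀, sub_zero] at hbound

lemma integral_rpow_mul_besselI_le_rpow_mul_besselI_add_one (hν : 0 < ν) (hx : 0 ≤ x) :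
    ∫ t in 0..x, t ^ ν * besselI ν t ≤
      2 * (ν + 1) / (2 * ν + 1) * (x ^ ν * besselI (ν + 1) x) := by
  have hν₀ : 0 < ν + (ν + 1) := by linarith
  have hcont : ContinuousOn (fun t ↦ t ^ ν * besselI ν t) (Icc 0 x) :=
    (continuousOn_rpow_mul_besselI (by linarith)).mono Icc_subset_Ici_self
  have hcont' : ContinuousOn
      (fun t ↦ 2 * (ν + 1) / (2 * ν + 1) * (t ^ ν * besselI (ν + 1) t)) (Icc 0 x) :=
    ((continuousOn_rpow_mul_besselI hν₀).mono Icc_subset_Ici_self).const_mul _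
  have hbound := intervalIntegral.integral_le_sub_of_hasDeriv_right_of_le hx hcont'
    (fun t ht ↦ ((hasDerivAt_rpow_mul_besselI ν (ν + 1) ht.1).const_mul _).hasDerivWithinAt)
    hcont.integrableOn_Icc fun t ht ↦ by
      have ht₀ : 0 < t := ht.1
      have hI : 0 < besselI (ν + 2) t := besselI_pos (by linarith) ht₀
      rw [mul_left_comm, add_assoc ν 1 1, one_add_one_eq_two, besselI_eq_add ν ht₀]
      gcongr
      field_simp
      nlinarith
  rwa [rpow_mul_besselI_zero_right hν₀, mul_zero, sub_zero] at hbound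

lemma integral_exp_mul_rpow_mul_besselI_le {β : ℝ} (hβ : -1 < β) (hβ₀ : β ≤ 0) (hν : 1 / 2 ≤ ν)
    (hx : 0 ≤ x) :
    ∫ t in 0..x, exp (β * t) * t ^ ν * besselI ν t ≤
      exp (β * x) * (2 * (ν + 1) / ((2 * ν + 1) * (1 + β))) * (x ^ ν * besselI (ν + 1) x) := by
  have hβ₁ : 0 < 1 + β := by linarith
  have hexp := one_add_mul_integral_exp_mul_le hx hβ₀
    ((continuousOn_rpow_mul_besselI (by linarith)).mono Icc_subset_Ici_self)
    (fun t ht ↦ integral_rpow_mul_besselI_le_rpow_mul_besselI hν ht.1.le)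
  simp only [← mul_assoc] at hexp
  calc ∫ t in 0..x, exp (β * t) * t ^ ν * besselI ν t
      ≤ exp (β * x) / (1 + β) * ∫ t in 0..x, t ^ ν * besselI ν t := by
        rw [div_mul_eq_mul_div, le_div_iff₀' hβ₁]
        exact hexp
    _ ≤ exp (β * x) / (1 + β) * (2 * (ν + 1) / (2 * ν + 1) * (x ^ ν * besselI (ν + 1) x)) := by
        gcongr
        exact integral_rpow_mul_besselI_le_rpow_mul_besselI_add_one (by linarith) hx
    _ = _ := by
        field_simp

end Integral

theorem stmt_10 (β ν : ℝ) (hβ0 : -1 < β) (hβ1 : β < 0) (hν : 1/2 ≤ ν) (x : ℝ) (hx : 0 < x) :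
    (Real.exp (-β * x) * besselK (ν + 2) x / x ^ (ν - 1)) *
        ∫ t in (0 : ℝ)..x, Real.exp (β * t) * t ^ ν * besselI ν t <
      2 * (ν + 1) / ((2 * ν + 1) * (1 + β)) := by
  have hβ : 0 < 1 + β := by linarith
  have hK : 0 < besselK (ν + 2) x := besselK_pos _ hx
  have hIK : x * (besselI (ν + 1) x * besselK (ν + 2) x) < 1 := by
    simpa [add_assoc, one_add_one_eq_two] using
      mul_besselI_mul_besselK_lt_one (show 0 < ν + 1 by linarith) hx
  calc _ ≤ exp (-β * x) * besselK (ν + 2) x / x ^ (ν - 1) *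
        (exp (β * x) * (2 * (ν + 1) / ((2 * ν + 1) * (1 + β))) * (x ^ ν * besselI (ν + 1) x)) := by
        gcongr
        exact integral_exp_mul_rpow_mul_besselI_le hβ0 hβ1.le hν hx.le
    _ = 2 * (ν + 1) / ((2 * ν + 1) * (1 + β)) *
        (x * (besselI (ν + 1) x * besselK (ν + 2) x)) := by
        rw [neg_mul, exp_neg, rpow_sub_one hx.ne']
        field_simp
    _ < 2 * (ν + 1) / ((2 * ν + 1) * (1 + β)) :=
        mul_lt_of_lt_one_right (by positivity) hIK
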